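/- Let u ∈ ℝⁿ be a standard Gaussian random vector. Then for every odd positive integer k, E[‖u‖ᵏ u uᵀ] ⪯ (n+1)(n+3)···(n+k) · n^{-1/2} · I in the Loewner order. -/

import Mathlib

open MeasureTheory ProbabilityTheory

/-- The standard Gaussian measure N(0, I) on ℝⁿ. -/
noncomputable def stdGaussian (n : ℕ) : Measure (EuclideanSpace ℝ (Fin n)) :=
  (Measure.pi fun _ : Fin n => gaussianReal 0 1).map (EuclideanSpace.equiv (Fin n) ℝ).symm

/-- The density of `N(0, I)` on a real inner product space `E`. -/
noncomputable def stdGaussianDensity (E : Type*) [NormedAddCommGroup E] [Module ℝ E] (x : E) : ℝ :=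
  ((2 * Real.pi) ^ ((Module.finrank ℝ E : ℝ) / 2))⁻¹ * Real.exp (-(1 / 2) * ‖x‖ ^ 2)

section Density

variable {E : Type*} [NormedAddCommGroup E] [InnerProductSpace ℝ E]

lemma stdGaussianDensity_nonneg (x : E) : 0 ≤ stdGaussianDensity E x := by
  unfold stdGaussianDensity; positivity

lemma continuous_stdGaussianDensity : Continuous (stdGaussianDensity E) := by
  unfold stdGaussianDensity; fun_prop

variable [FiniteDimensional ℝ E] [MeasurableSpace E] [BorelSpace E]

lemma integrable_stdGaussianDensity : Integrable (stdGaussianDensity E) := by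
  have h := GaussianFourier.integrable_cexp_neg_mul_sq_norm_add (V := E) (b := 1 / 2)
    (by norm_num) 0 0
  refine Integrable.const_mul (h.norm.congr (ae_of_all _ fun x => ?_)) _
  simp only [Complex.norm_exp]
  congr 1
  norm_cast
  simp [-Complex.ofReal_pow]

lemma stdGaussian_eq_withDensity :
    ProbabilityTheory.stdGaussian E =
      volume.withDensity fun x => ENNReal.ofReal (stdGaussianDensity E x) := by
  have : IsFiniteMeasure (volume.withDensity fun x => ENNReal.ofReal (stdGaussianDensity E x)) :=
    isFiniteMeasure_withDensity_ofReal integrable_stdGaussianDensity.2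
  apply Measure.ext_of_charFun
  ext t
  rw [charFun_stdGaussian, charFun_apply, integral_withDensity_eq_integral_toReal_smul
    continuous_stdGaussianDensity.measurable.ennreal_ofReal (by simp)]
  have h := GaussianFourier.integral_cexp_neg_mul_sq_norm_add (V := E) (b := 1 / 2)
    (by norm_num) Complex.I t
  have key : ∀ x : E, (ENNReal.ofReal (stdGaussianDensity E x)).toReal •
      Complex.exp (inner ℝ x t * Complex.I) =
      (((2 * Real.pi) ^ ((Module.finrank ℝ E : ℝ) / 2))⁻¹ : ℝ) *
        Complex.exp (-(1 / 2) * ‖x‖ ^ 2 + Complex.I * inner ℝ t x) := by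
    intro x
    rw [ENNReal.toReal_ofReal (stdGaussianDensity_nonneg x), stdGaussianDensity, Complex.real_smul,
      Complex.exp_add, real_inner_comm]
    push_cast
    ring_nf
  simp_rw [key]
  rw [integral_const_mul, h, ← mul_assoc]
  have h2 : ((((2 * Real.pi) ^ ((Module.finrank ℝ E : ℝ) / 2))⁻¹ : ℝ) : ℂ) *
      ((Real.pi : ℂ) / (1 / 2)) ^ ((Module.finrank ℝ E : ℂ) / 2) = 1 := by
    have : ((Real.pi : ℂ) / (1 / 2)) ^ ((Module.finrank ℝ E : ℂ) / 2) =
        (((2 * Real.pi) ^ ((Module.finrank ℝ E : ℝ) / 2) : ℝ) : ℂ) := by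
      rw [Complex.ofReal_cpow (by positivity)]
      push_cast
      congr 1
      ring
    rw [this, ← Complex.ofReal_mul, inv_mul_cancel₀ (by positivity), Complex.ofReal_one]
  rw [h2, one_mul, Complex.I_sq]
  congr 1
  ring

lemma integral_fun_norm_stdGaussian [Nontrivial E] (f : ℝ → ℝ) :
    ∫ x, f ‖x‖ ∂ProbabilityTheory.stdGaussian E =
      (Module.finrank ℝ E * volume.real (Metric.ball (0 : E) 1) *
        ((2 * Real.pi) ^ ((Module.finrank ℝ E : ℝ) / 2))⁻¹) *
      ∫ y in Set.Ioi (0 : ℝ), y ^ (Module.finrank ℝ E - 1) *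
        (Real.exp (-(1 / 2) * y ^ 2) * f y) := by
  rw [stdGaussian_eq_withDensity, integral_withDensity_eq_integral_toReal_smul
    continuous_stdGaussianDensity.measurable.ennreal_ofReal (by simp)]
  simp_rw [ENNReal.toReal_ofReal (stdGaussianDensity_nonneg _), stdGaussianDensity, smul_eq_mul,
    mul_assoc]
  rw [integral_const_mul, integral_fun_norm_addHaar volume
    (fun y => Real.exp (-(1 / 2) * y ^ 2) * f y)]
  simp only [smul_eq_mul, nsmul_eq_mul]
  ring

lemma integral_pow_mul_exp_neg_half_sq (m : ℕ) :
    ∫ y in Set.Ioi (0 : ℝ), y ^ m * Real.exp (-(1 / 2) * y ^ 2) =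
      (1 / 2 : ℝ) ^ (-((m : ℝ) + 1) / 2) * (1 / 2) * Real.Gamma (((m : ℝ) + 1) / 2) := by
  rw [← integral_rpow_mul_exp_neg_mul_rpow (p := 2) (q := m) (b := 1 / 2) (by norm_num)
    (by have := m.cast_nonneg (α := ℝ); linarith) (by norm_num)]
  simp

lemma integral_pow_add_two_mul_exp_neg_half_sq (m : ℕ) :
    ∫ y in Set.Ioi (0 : ℝ), y ^ (m + 2) * Real.exp (-(1 / 2) * y ^ 2) =
      (m + 1) * ∫ y in Set.Ioi (0 : ℝ), y ^ m * Real.exp (-(1 / 2) * y ^ 2) := by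
  rw [integral_pow_mul_exp_neg_half_sq, integral_pow_mul_exp_neg_half_sq]
  push_cast
  rw [show ((m : ℝ) + 2 + 1) / 2 = ((m : ℝ) + 1) / 2 + 1 by ring,
    Real.Gamma_add_one (by positivity),
    show -((m : ℝ) + 2 + 1) / 2 = -((m : ℝ) + 1) / 2 - 1 by ring,
    Real.rpow_sub_one (by norm_num)]
  ring

lemma integral_norm_pow_add_two_stdGaussian [Nontrivial E] (p : ℕ) :
    ∫ x, ‖x‖ ^ (p + 2) ∂ProbabilityTheory.stdGaussian E =
      (Module.finrank ℝ E + p) * ∫ x, ‖x‖ ^ p ∂ProbabilityTheory.stdGaussian E := by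
  have h0 : 0 < Module.finrank ℝ E := Module.finrank_pos
  obtain ⟨d, hd⟩ : ∃ d, Module.finrank ℝ E = d + 1 := ⟨_, (Nat.succ_pred_eq_of_pos h0).symm⟩
  have h (q : ℕ) (y : ℝ) : y ^ (Module.finrank ℝ E - 1) * (Real.exp (-(1 / 2) * y ^ 2) * y ^ q) =
      y ^ (d + q) * Real.exp (-(1 / 2) * y ^ 2) := by
    rw [hd, Nat.add_sub_cancel, pow_add]; ring
  rw [integral_fun_norm_stdGaussian (fun y => y ^ (p + 2)),
    integral_fun_norm_stdGaussian (fun y => y ^ p)]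
  simp_rw [h]
  rw [← add_assoc, integral_pow_add_two_mul_exp_neg_half_sq, hd]
  push_cast
  ring

lemma integrable_norm_pow_stdGaussian (p : ℕ) :
    Integrable (fun x => ‖x‖ ^ p) (ProbabilityTheory.stdGaussian E) := by
  have := (IsGaussian.memLp_id (ProbabilityTheory.stdGaussian E) p (by simp)).integrable_norm_pow'
  simpa using this

lemma integral_norm_stdGaussian_le [Nontrivial E] :
    ∫ x, ‖x‖ ∂ProbabilityTheory.stdGaussian E ≤ √(Module.finrank ℝ E) := by
  have h2 := integral_norm_pow_add_two_stdGaussian (E := E) 0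
  have hv := variance_eq_sub (IsGaussian.memLp_two_id (μ := ProbabilityTheory.stdGaussian E)).norm
  have := variance_nonneg (fun x : E => ‖id x‖) (ProbabilityTheory.stdGaussian E)
  apply Real.le_sqrt_of_sq_le
  simp only [zero_add, pow_zero, integral_const, probReal_univ, smul_eq_mul, Nat.cast_zero,
    add_zero, mul_one] at h2
  simp only [id_eq, Pi.pow_apply, h2] at hv this
  linarith

lemma integral_norm_pow_odd_stdGaussian [Nontrivial E] (m : ℕ) :
    ∫ x, ‖x‖ ^ (2 * m + 1) ∂ProbabilityTheory.stdGaussian E =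
      (∏ i ∈ Finset.range m, ((Module.finrank ℝ E : ℝ) + (2 * i + 1))) *
        ∫ x, ‖x‖ ∂ProbabilityTheory.stdGaussian E := by
  induction m with
  | zero => simp
  | succ m ih =>
    rw [show 2 * (m + 1) + 1 = 2 * m + 1 + 2 by ring, integral_norm_pow_add_two_stdGaussian, ih,
      Finset.prod_range_succ]
    push_cast
    ring

lemma integral_comp_stdGaussian (e : E ≃ₗᵢ[ℝ] E) (f : E → ℝ) :
    ∫ x, f (e x) ∂ProbabilityTheory.stdGaussian E = ∫ x, f x ∂ProbabilityTheory.stdGaussian E := by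
  conv_rhs => rw [← stdGaussian_map e]
  exact (integral_map_equiv e.toHomeomorph.toMeasurableEquiv f).symm

end Density

section Coordinates

variable {ι : Type*} [Fintype ι]

lemma integral_norm_pow_mul_coord_of_ne (k : ℕ) {i j : ι} (hij : i ≠ j) :
    ∫ u, ‖u‖ ^ k * (u i * u j) ∂ProbabilityTheory.stdGaussian (EuclideanSpace ℝ ι) = 0 := by
  classical
  let e : EuclideanSpace ℝ ι ≃ₗᵢ[ℝ] EuclideanSpace ℝ ι :=
    LinearIsometryEquiv.piLpCongrRight 2 fun l : ι =>
      if l = i then LinearIsometryEquiv.neg ℝ else LinearIsometryEquiv.refl ℝ ℝ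
  have h := integral_comp_stdGaussian e fun u => ‖u‖ ^ k * (u i * u j)
  have h1 (u : EuclideanSpace ℝ ι) : e u i = -u i := by simp [e]
  have h2 (u : EuclideanSpace ℝ ι) : e u j = u j := by simp [e, hij.symm]
  simp only [LinearIsometryEquiv.norm_map, h1, h2, neg_mul, mul_neg, integral_neg] at h
  linarith

lemma integral_norm_pow_mul_coord_sq_eq (k : ℕ) (i j : ι) :
    ∫ u, ‖u‖ ^ k * (u i * u i) ∂ProbabilityTheory.stdGaussian (EuclideanSpace ℝ ι) =
      ∫ u, ‖u‖ ^ k * (u j * u j) ∂ProbabilityTheory.stdGaussian (EuclideanSpace ℝ ι) := by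
  classical
  let e : EuclideanSpace ℝ ι ≃ₗᵢ[ℝ] EuclideanSpace ℝ ι :=
    LinearIsometryEquiv.piLpCongrLeft 2 ℝ ℝ (Equiv.swap i j)
  have h := integral_comp_stdGaussian e fun u => ‖u‖ ^ k * (u i * u i)
  have h1 (u : EuclideanSpace ℝ ι) : e u i = u j := by
    simp [e, LinearIsometryEquiv.piLpCongrLeft_apply, Equiv.piCongrLeft']
  simp only [LinearIsometryEquiv.norm_map, h1] at h
  exact h.symm

lemma card_mul_integral_norm_pow_mul_coord_sq (k : ℕ) (i : ι) :
    Fintype.card ι *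
      ∫ u, ‖u‖ ^ k * (u i * u i) ∂ProbabilityTheory.stdGaussian (EuclideanSpace ℝ ι) =
      ∫ u, ‖u‖ ^ (k + 2) ∂ProbabilityTheory.stdGaussian (EuclideanSpace ℝ ι) := by
  have hint (j : ι) : Integrable (fun u : EuclideanSpace ℝ ι => ‖u‖ ^ k * (u j * u j))
      (ProbabilityTheory.stdGaussian (EuclideanSpace ℝ ι)) := by
    refine (integrable_norm_pow_stdGaussian (k + 2)).mono'
      (Measurable.aestronglyMeasurable (by fun_prop)) (ae_of_all _ fun u => ?_)
    rw [norm_mul, norm_mul, norm_pow, norm_norm, pow_add, ← sq]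
    gcongr
    exact PiLp.norm_apply_le u j
  calc _ = ∑ j, ∫ u, ‖u‖ ^ k * (u j * u j)
        ∂ProbabilityTheory.stdGaussian (EuclideanSpace ℝ ι) := by
        simp_rw [fun j => integral_norm_pow_mul_coord_sq_eq k j i]
        simp
    _ = ∫ u, ∑ j, ‖u‖ ^ k * (u j * u j)
        ∂ProbabilityTheory.stdGaussian (EuclideanSpace ℝ ι) :=
        (integral_finsetSum _ fun j _ => hint j).symm
    _ = _ := by
        congr 1 with u
        rw [← Finset.mul_sum, pow_add, EuclideanSpace.real_norm_sq_eq]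
        simp_rw [sq]

end Coordinates

lemma stdGaussian_eq (n : ℕ) :
    _root_.stdGaussian n = ProbabilityTheory.stdGaussian (EuclideanSpace ℝ (Fin n)) :=
  map_pi_eq_stdGaussian

/-- For u ~ N(0, I) and odd positive k,
E[‖u‖ᵏ u uᵀ] ⪯ (n+1)(n+3)···(n+k) n^{-1/2} I in the Loewner order. -/
theorem gaussian_odd_norm_moment_outer (n k : ℕ) (hn : 0 < n) (hk : Odd k) :
    (((∏ i ∈ Finset.range ((k + 1) / 2), ((n : ℝ) + (2 * i + 1))) * (Real.sqrt n)⁻¹) •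
        (1 : Matrix (Fin n) (Fin n) ℝ)
      - Matrix.of fun i j => ∫ u, ‖u‖ ^ k * (u i * u j) ∂ stdGaussian n).PosSemidef := by
  have : NeZero n := ⟨hn.ne'⟩
  obtain ⟨m, rfl⟩ := hk
  rw [show (2 * m + 1 + 1) / 2 = m + 1 by omega, stdGaussian_eq]
  set c := ∏ i ∈ Finset.range (m + 1), ((n : ℝ) + (2 * i + 1)) with hc
  have hc0 : 0 ≤ c := Finset.prod_nonneg fun i _ => by positivity
  have hn' : (0 : ℝ) < n := by exact_mod_cast hn
  have hM : (Matrix.of fun i j : Fin n => ∫ u, ‖u‖ ^ (2 * m + 1) * (u i * u j)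
        ∂ProbabilityTheory.stdGaussian (EuclideanSpace ℝ (Fin n))) =
      Matrix.diagonal fun i : Fin n => ∫ u, ‖u‖ ^ (2 * m + 1) * (u i * u i)
        ∂ProbabilityTheory.stdGaussian (EuclideanSpace ℝ (Fin n)) := by
    ext i j
    rcases eq_or_ne i j with rfl | hij
    · simp
    · simpa [hij] using integral_norm_pow_mul_coord_of_ne _ hij
  rw [hM, Matrix.smul_one_eq_diagonal, Matrix.diagonal_sub, Matrix.posSemidef_diagonal_iff]
  intro i
  have h1 := card_mul_integral_norm_pow_mul_coord_sq (2 * m + 1) i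
  have h2 := integral_norm_pow_odd_stdGaussian (E := EuclideanSpace ℝ (Fin n)) (m + 1)
  have h3 := integral_norm_stdGaussian_le (E := EuclideanSpace ℝ (Fin n))
  simp only [finrank_euclideanSpace, Fintype.card_fin] at h1 h2 h3
  rw [show 2 * (m + 1) + 1 = 2 * m + 1 + 2 by ring, ← hc] at h2
  rw [h2] at h1
  rw [sub_nonneg]
  refine le_of_mul_le_mul_left (h1.le.trans ?_) hn'
  calc _ ≤ c * √n := by gcongr
    _ = _ := by
      have : √(n : ℝ) ≠ 0 := by positivity
      field_simp
      rw [Real.sq_sqrt hn'.le]
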